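/- An essential arrangement A(α) is formal if and only if every λ ∈ Kⁿ satisfying all local relation conditions at rank-2 flats (i.e. λ ∈ ker N^{[3]}) lies in the image of M(α)ᵀ; equivalently, A is formal if and only if A has no nontrivial weak perspective representations up to rank 3. -/

import Mathlib

/-!
A nonzero relation makes the vectors on its support dependent, so a relation with at most three
terms lives on vectors of rank at most two, and the rank is exactly two when the vectors are
pairwise independent: the relation is then local to a rank-2 flat. Conversely, any `r + 1` vectors
of a flat of rank `r` are dependent, and subtracting a multiple of a relation among `r + 1` vectors
in the support of a longer relation shortens the latter; so relations local to a rank-2 flat are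
spanned by those with at most three terms. Hence the short relations and the local relations span
the same subspace `W` of the space `L` of all relations. Under the dot product on `Kⁿ`, the
orthogonal complement of `L` is the image of `M(α)ᵀ` and that of `W` is the space of weak
perspective representations, and `L ≤ W` if and only if `Wᗮ ≤ Lᗮ`.
-/

open Module Submodule Function

section Flats

variable (R : Type*) {ι M : Type*} [Semiring R] [AddCommMonoid M] [Module R M] (α : ι → M)

/-- The flats of the matroid represented by `α`, as sets of indices. -/
def IsLinearFlat (X : Set ι) : Prop :=
  ∀ j, α j ∈ span R (α '' X) → j ∈ X

theorem span_image_preimage_span_image (S : Set ι) :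
    span R (α '' (α ⁻¹' span R (α '' S))) = span R (α '' S) :=
  le_antisymm (span_le.2 (Set.image_preimage_subset _ _))
    (span_mono (Set.image_mono (Set.image_subset_iff.1 subset_span)))

theorem isLinearFlat_preimage_span_image (S : Set ι) :
    IsLinearFlat R α (α ⁻¹' span R (α '' S)) := fun j hj => by
  rwa [span_image_preimage_span_image] at hj

end Flats

section Relations

variable (R : Type*) {ι M : Type*} [Semiring R] [Fintype ι] [AddCommMonoid M] [Module R M]
  (α : ι → M)

/-- The space of linear relations among the vectors `α i`, i.e. the kernel of `M(α)`. -/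
def linearRelations : Submodule R (ι → R) :=
  LinearMap.ker (Fintype.linearCombination R α)

/-- The span of the linear relations with at most `k` nonzero coefficients. -/
def shortRelations (k : ℕ) : Submodule R (ι → R) :=
  span R {w | w ∈ linearRelations R α ∧ (support w).ncard ≤ k}

/-- The span of the linear relations local to some flat of rank `r`; for `r = 2` this is the row
space of `N^{[3]}`. -/
def flatRelations (r : ℕ) : Submodule R (ι → R) :=
  span R {γ | ∃ X, IsLinearFlat R α X ∧ finrank R (span R (α '' X)) = r ∧
    (∀ i, i ∉ X → γ i = 0) ∧ γ ∈ linearRelations R α}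

/-- Formality of the arrangement defined by `α`: the linear relations are spanned by those with at
most three nonzero coefficients. -/
def IsFormal : Prop :=
  linearRelations R α ≤ shortRelations R α 3

/-- Weak perspective representations up to rank 3, i.e. the elements of `ker N^{[3]}`: the vectors
orthogonal to every linear relation local to a rank-2 flat. -/
def IsWeakPerspectiveRep (lam : ι → R) : Prop :=
  ∀ X : Set ι, IsLinearFlat R α X → finrank R (span R (α '' X)) = 2 →
    ∀ γ : ι → R, (∀ i, i ∉ X → γ i = 0) → γ ∈ linearRelations R α → γ ⬝ᵥ lam = 0

variable {R α}

theorem mem_linearRelations {w : ι → R} : w ∈ linearRelations R α ↔ ∑ i, w i • α i = 0 :=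
  Iff.rfl

theorem mem_flatRelations_finrank_span_image_support {w : ι → R}
    (hw : w ∈ linearRelations R α) :
    w ∈ flatRelations R α (finrank R (span R (α '' support w))) :=
  subset_span ⟨α ⁻¹' span R (α '' support w), isLinearFlat_preimage_span_image R α _,
    by rw [span_image_preimage_span_image],
    support_subset_iff'.1 (Set.image_subset_iff.1 subset_span), hw⟩

end Relations

theorem not_linearIndepOn_iff_exists_linearRelation {R ι M : Type*} [Ring R] [Fintype ι]
    [AddCommGroup M] [Module R M] {α : ι → M} {S : Set ι} :
    ¬ LinearIndepOn R α S ↔ ∃ w ∈ linearRelations R α, support w ⊆ S ∧ w ≠ 0 := by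
  rw [linearDepOn_iff', (Finsupp.linearEquivFunOnFinite R R ι).symm.surjective.exists]
  refine exists_congr fun w => ?_
  rw [Finsupp.linearCombination_eq_fintype_linearCombination_apply, Finsupp.mem_supported,
    ← Finsupp.fun_support_eq, LinearEquiv.map_ne_zero_iff]
  exact and_left_comm

section DivisionRing

variable {K ι M : Type*} [DivisionRing K] [AddCommGroup M] [Module K M] {α : ι → M}

theorem finrank_span_image_mono {S T : Set ι} (hT : T.Finite) (hST : S ⊆ T) :
    finrank K (span K (α '' S)) ≤ finrank K (span K (α '' T)) :=
  have := FiniteDimensional.span_of_finite K (hT.image α)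
  finrank_mono (span_mono (Set.image_mono hST))

theorem linearIndepOn_iff_ncard_le_finrank_span_image {S : Set ι} (hS : S.Finite) :
    LinearIndepOn K α S ↔ S.ncard ≤ finrank K (span K (α '' S)) := by
  have := hS.fintype
  rw [LinearIndepOn, linearIndependent_iff_card_le_finrank_span, Set.finrank, Set.image_eq_range,
    Set.ncard_eq_toFinset_card', Set.toFinset_card]

theorem support_sub_smul_ssubset {γ w : ι → K} (hsupp : support w ⊆ support γ) {i : ι}
    (hi : w i ≠ 0) : support (γ - (γ i * (w i)⁻¹) • w) ⊂ support γ := by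
  refine Set.ssubset_iff_of_subset ?_ |>.2 ⟨i, hsupp hi, by simp [hi]⟩
  intro j hj hγj
  have hwj : w j = 0 := notMem_support.1 fun hwj => hsupp hwj hγj
  exact hj (by simp [hγj, hwj])

variable [Fintype ι]

theorem finrank_span_image_support_lt_ncard {w : ι → K} (hw : w ∈ linearRelations K α)
    (hw0 : w ≠ 0) : finrank K (span K (α '' support w)) < (support w).ncard := by
  rw [← not_le, ← linearIndepOn_iff_ncard_le_finrank_span_image (Set.toFinite _),
    not_linearIndepOn_iff_exists_linearRelation]
  exact ⟨w, hw, subset_rfl, hw0⟩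

theorem exists_linearRelation_of_finrank_lt_ncard {S : Set ι}
    (hS : finrank K (span K (α '' S)) < S.ncard) :
    ∃ w ∈ linearRelations K α, support w ⊆ S ∧ w ≠ 0 ∧
      (support w).ncard ≤ finrank K (span K (α '' S)) + 1 := by
  obtain ⟨T, hTS, hT⟩ := Set.exists_subset_card_eq (Nat.succ_le_of_lt hS)
  have hdep : ¬ LinearIndepOn K α T := by
    rw [linearIndepOn_iff_ncard_le_finrank_span_image T.toFinite, hT, not_le, Nat.lt_succ_iff]
    exact finrank_span_image_mono S.toFinite hTS
  obtain ⟨w, hw, hwT, hw0⟩ := not_linearIndepOn_iff_exists_linearRelation.1 hdep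
  exact ⟨w, hw, hwT.trans hTS, hw0, (Set.ncard_le_ncard hwT).trans_eq hT⟩

theorem mem_shortRelations_finrank_span_image_add_one {X : Set ι} {γ : ι → K}
    (hγ : γ ∈ linearRelations K α) (hγX : support γ ⊆ X) :
    γ ∈ shortRelations K α (finrank K (span K (α '' X)) + 1) := by
  induction hcard : (support γ).ncard using Nat.strong_induction_on generalizing γ with
  | _ m ih =>
  have hrank := finrank_span_image_mono (K := K) (α := α) X.toFinite hγX
  rcases le_or_gt (support γ).ncard (finrank K (span K (α '' X)) + 1) with hshort | hlong
  · exact subset_span ⟨hγ, hshort⟩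
  obtain ⟨w, hw, hwγ, hw0, hwcard⟩ :=
    exists_linearRelation_of_finrank_lt_ncard (K := K) (α := α) (S := support γ) (by lia)
  obtain ⟨i, hi⟩ := Function.ne_iff.1 hw0
  have hlt := support_sub_smul_ssubset hwγ hi
  have hw_short : w ∈ shortRelations K α (finrank K (span K (α '' X)) + 1) :=
    subset_span ⟨hw, by lia⟩
  rw [← sub_add_cancel γ ((γ i * (w i)⁻¹) • w)]
  exact add_mem (ih _ (hcard ▸ Set.ncard_lt_ncard hlt) (sub_mem hγ (smul_mem _ _ hw))
    (hlt.subset.trans hγX) rfl) (smul_mem _ _ hw_short)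

theorem flatRelations_le_shortRelations (r : ℕ) :
    flatRelations K α r ≤ shortRelations K α (r + 1) := by
  refine span_le.2 ?_
  rintro γ ⟨X, -, rfl, hγX, hγ⟩
  exact mem_shortRelations_finrank_span_image_add_one hγ (support_subset_iff'.2 hγX)

theorem two_le_finrank_span_image_support (hne : ∀ i, α i ≠ 0)
    (hprop : ∀ i j, i ≠ j → ∀ c : K, α i ≠ c • α j) {w : ι → K}
    (hw : w ∈ linearRelations K α) (hw0 : w ≠ 0) :
    2 ≤ finrank K (span K (α '' support w)) := by
  obtain ⟨a, ha⟩ : (support w).Nonempty := support_nonempty_iff.2 hw0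
  have hrank_pos : 1 ≤ finrank K (span K (α '' support w)) := by
    rw [← finrank_span_singleton (K := K) (hne a), ← Set.image_singleton]
    exact finrank_span_image_mono (Set.toFinite _) (Set.singleton_subset_iff.2 ha)
  obtain ⟨b, hb, hba⟩ := Set.exists_ne_of_one_lt_ncard
    (hrank_pos.trans_lt (finrank_span_image_support_lt_ncard hw hw0)) a
  have hindep : LinearIndepOn K α {a, b} :=
    (linearIndepOn_pair_iff α hba.symm (hne a)).2 fun c => (hprop b a hba c).symm
  calc 2 = ({a, b} : Set ι).ncard := (Set.ncard_pair hba.symm).symm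
    _ ≤ finrank K (span K (α '' {a, b})) :=
      (linearIndepOn_iff_ncard_le_finrank_span_image (Set.toFinite _)).1 hindep
    _ ≤ finrank K (span K (α '' support w)) :=
      finrank_span_image_mono (Set.toFinite _) (Set.pair_subset ha hb)

theorem shortRelations_three_eq_flatRelations_two (hne : ∀ i, α i ≠ 0)
    (hprop : ∀ i j, i ≠ j → ∀ c : K, α i ≠ c • α j) :
    shortRelations K α 3 = flatRelations K α 2 := by
  refine le_antisymm (span_le.2 ?_) (flatRelations_le_shortRelations 2)
  rintro w ⟨hw, hcard⟩
  rcases eq_or_ne w 0 with rfl | hw0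
  · exact zero_mem _
  have hlower := two_le_finrank_span_image_support hne hprop hw hw0
  have hupper := finrank_span_image_support_lt_ncard hw hw0
  have hrank : finrank K (span K (α '' support w)) = 2 := by lia
  exact hrank ▸ mem_flatRelations_finrank_span_image_support hw

end DivisionRing

section Duality

variable (R : Type*) {ι V M : Type*} [CommRing R] [Fintype ι] [AddCommGroup V] [Module R V]
  [AddCommMonoid M] [Module R M]

variable (ι) in
/-- The dot product on `R^ι` as a bilinear form, which identifies `R^ι` with its dual. -/
def dotProductForm : LinearMap.BilinForm R (ι → R) := dotProductBilin R R

theorem isRefl_dotProductForm : (dotProductForm R ι).IsRefl := fun v w h =>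
  (dotProduct_comm w v).trans h

theorem nondegenerate_dotProductForm : (dotProductForm R ι).Nondegenerate :=
  (isRefl_dotProductForm R).nondegenerate_iff_separatingLeft.2 fun _ => dotProduct_eq_zero_iff.1

variable {R}

theorem isWeakPerspectiveRep_iff_mem_orthogonal {α : ι → M} {lam : ι → R} :
    IsWeakPerspectiveRep R α lam ↔ lam ∈ (dotProductForm R ι).orthogonal (flatRelations R α 2) := by
  have hspan : lam ∈ (dotProductForm R ι).orthogonal (flatRelations R α 2) ↔
      flatRelations R α 2 ≤ LinearMap.ker ((dotProductForm R ι).flip lam) := Iff.rfl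
  rw [hspan, flatRelations, span_le]
  exact ⟨fun h γ ⟨X, hX, hrank, hγX, hγ⟩ => h X hX hrank γ hγX hγ,
    fun h X hX hrank γ hγX hγ => h ⟨X, hX, hrank, hγX, hγ⟩⟩

theorem orthogonal_range_pi_eq_linearRelations (α : ι → Dual R V) :
    (dotProductForm R ι).orthogonal (LinearMap.range (LinearMap.pi α)) = linearRelations R α := by
  ext γ
  rw [mem_linearRelations, LinearMap.BilinForm.mem_orthogonal_iff, LinearMap.ext_iff]
  simp [dotProductForm, dotProduct, mul_comm]

end Duality

section Field

variable {K ι V : Type*} [Field K] [AddCommGroup V] [Module K V]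

theorem orthogonal_le_orthogonal_iff_of_nondegenerate [FiniteDimensional K V]
    {B : LinearMap.BilinForm K V} (hB : B.Nondegenerate) (hrefl : B.IsRefl)
    {W₁ W₂ : Submodule K V} :
    B.orthogonal W₁ ≤ B.orthogonal W₂ ↔ W₂ ≤ W₁ := by
  refine ⟨fun h => ?_, LinearMap.BilinForm.orthogonal_le⟩
  simpa only [LinearMap.BilinForm.orthogonal_orthogonal hB hrefl] using
    LinearMap.BilinForm.orthogonal_le (B := B) h

variable [Fintype ι]

theorem orthogonal_linearRelations_eq_range_pi (α : ι → Dual K V) :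
    (dotProductForm K ι).orthogonal (linearRelations K α) = LinearMap.range (LinearMap.pi α) := by
  rw [← orthogonal_range_pi_eq_linearRelations, LinearMap.BilinForm.orthogonal_orthogonal
    (nondegenerate_dotProductForm K) (isRefl_dotProductForm K)]

theorem formal_iff_no_nontrivial_weak_perspective_reps_general
    (α : ι → Dual K V) (hne : ∀ i, α i ≠ 0) (hprop : ∀ i j, i ≠ j → ∀ c : K, α i ≠ c • α j) :
    IsFormal K α ↔
      ∀ lam, IsWeakPerspectiveRep K α lam → lam ∈ LinearMap.range (LinearMap.pi α) := by
  simp only [isWeakPerspectiveRep_iff_mem_orthogonal]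
  rw [IsFormal, shortRelations_three_eq_flatRelations_two hne hprop,
    ← orthogonal_linearRelations_eq_range_pi, ← SetLike.le_def,
    orthogonal_le_orthogonal_iff_of_nondegenerate (nondegenerate_dotProductForm K)
      (isRefl_dotProductForm K)]

end Field

/-- An essential arrangement A(α) is formal iff every λ ∈ Kⁿ
satisfying all local relation conditions at the rank-2 flats lies in the image
of M(α)ᵀ, i.e. iff A has no nontrivial weak perspective representations up to
rank 3. -/
theorem formal_iff_no_nontrivial_weak_perspective_reps
    (K : Type*) [Field K] (ℓ n : ℕ)
    (α : Fin n → Module.Dual K (Fin (ℓ + 1) → K))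
    (hne : ∀ i, α i ≠ 0)
    (hprop : ∀ i j : Fin n, i ≠ j → ∀ c : K, α i ≠ c • α j)
    (hess : (⨅ i, LinearMap.ker (α i)) = ⊥)
    (T : (Fin (ℓ + 1) → K) →ₗ[K] (Fin n → K))
    (hT : T = LinearMap.pi fun j => α j) :
    (∀ v : Fin n → K, (∑ i, v i • α i = 0) →
        v ∈ Submodule.span K
          {w : Fin n → K | (∑ i, w i • α i = 0) ∧
            (Function.support w).ncard ≤ 3}) ↔
    (∀ lam : Fin n → K,
      (∀ X : Set (Fin n),
        (∀ j : Fin n, α j ∈ Submodule.span K (α '' X) → j ∈ X) →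
        Module.finrank K (Submodule.span K (α '' X)) = 2 →
        ∀ γ : Fin n → K, (∀ i, i ∉ X → γ i = 0) →
          (∑ i, γ i • α i = 0) → ∑ i, γ i * lam i = 0) →
      lam ∈ LinearMap.range T) := by
  subst hT
  exact formal_iff_no_nontrivial_weak_perspective_reps_general α hne hprop
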